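/- Let π* be an optimal assignment for true weights w, let δ be an allowable perturbation for (w, π*), and let ŵ be measured weights such that |ŵ(a,b) − w(a,b)| ≤ ε̄(a,b) for every edge (a,b), where ε̄ : A × T → ℝ is a bound on the measurement errors. If ε̄(a,b) ≤ δ(a,b) for every edge (a,b) assigned in π* and δ(a,b) ≤ −ε̄(a,b) for every edge (a,b) not assigned in π*, then π* is an optimal assignment for the measured weights ŵ. -/

import Mathlib

open Finset Filter Topology

/-- Cost of an assignment `π : T → A` under weights `w : A × T → ℝ`. -/
noncomputable def cost {A T : Type*} [Fintype T] (w : A × T → ℝ) (π : T → A) : ℝ :=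
  ∑ b : T, w (π b, b)

/-- `πs` is an optimal assignment for weights `w`: it is injective (an assignment)
and minimizes the cost among all assignments. -/
def Optimal {A T : Type*} [Fintype T] (w : A × T → ℝ) (πs : T → A) : Prop :=
  Function.Injective πs ∧ ∀ π : T → A, Function.Injective π → cost w πs ≤ cost w π

/-- `δ` is an allowable perturbation for `(w, πs)`: `πs` remains optimal for `w + δ`. -/
def Allowable {A T : Type*} [Fintype T] (w δ : A × T → ℝ) (πs : T → A) : Prop :=
  Optimal (w + δ) πs

/-!
The weights for which a fixed assignment is optimal are closed under addition, and they contain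
every weight function that, at each task, is smallest on the assigned edge. Write the measured
weights as `(w + δ) + (what - (w + δ))`. The first summand is optimal by allowability; the error
bounds make the second nonpositive on assigned edges and nonnegative on all others.
-/

section

variable {A T : Type*} [Fintype T] {u v : A × T → ℝ} {πs : T → A}

theorem cost_add (u v : A × T → ℝ) (π : T → A) : cost (u + v) π = cost u π + cost v π :=
  Finset.sum_add_distrib

theorem Optimal.add (hu : Optimal u πs) (hv : Optimal v πs) : Optimal (u + v) πs := by
  refine ⟨hu.1, fun π hπ => ?_⟩
  rw [cost_add, cost_add]
  exact add_le_add (hu.2 π hπ) (hv.2 π hπ)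

theorem optimal_of_forall_le (hinj : Function.Injective πs)
    (hmin : ∀ a b, u (πs b, b) ≤ u (a, b)) : Optimal u πs :=
  ⟨hinj, fun π _ => Finset.sum_le_sum fun b _ => hmin (π b) b⟩

theorem Optimal.of_assigned_le_of_le_unassigned (hv : Optimal v πs)
    (hassigned : ∀ b, u (πs b, b) ≤ v (πs b, b))
    (hunassigned : ∀ a b, πs b ≠ a → v (a, b) ≤ u (a, b)) : Optimal u πs := by
  have hdiff : Optimal (u - v) πs := by
    refine optimal_of_forall_le hv.1 fun a b => ?_
    obtain rfl | hne := eq_or_ne (πs b) a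
    · exact le_rfl
    · exact (sub_nonpos.2 (hassigned b)).trans (sub_nonneg.2 (hunassigned a b hne))
  simpa only [add_sub_cancel] using hv.add hdiff

end

theorem stmt18_general {A T : Type*} [Fintype T]
    (w δ what εbar : A × T → ℝ) (πs : T → A)
    (hδ : Allowable w δ πs)
    (herr : ∀ a b, |what (a, b) - w (a, b)| ≤ εbar (a, b))
    (h1 : ∀ a b, πs b = a → εbar (a, b) ≤ δ (a, b))
    (h2 : ∀ a b, πs b ≠ a → δ (a, b) ≤ -εbar (a, b)) :
    Optimal what πs := by
  refine Optimal.of_assigned_le_of_le_unassigned hδ (fun b => ?_) fun a b hne => ?_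
  · calc
      what (πs b, b) ≤ w (πs b, b) + εbar (πs b, b) :=
        sub_le_iff_le_add'.1 (abs_le.1 (herr (πs b) b)).2
      _ ≤ w (πs b, b) + δ (πs b, b) := by gcongr; exact h1 (πs b) b rfl
  · calc
      w (a, b) + δ (a, b) ≤ w (a, b) + -εbar (a, b) := by gcongr; exact h2 a b hne
      _ ≤ what (a, b) := le_sub_iff_add_le'.1 (abs_le.1 (herr a b)).1

theorem stmt18 {A T : Type*} [Fintype A] [Fintype T] [Nonempty A] [Nonempty T]
    (hAT : Fintype.card T ≤ Fintype.card A)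
    (w δ what εbar : A × T → ℝ) (πs : T → A)
    (hopt : Optimal w πs)
    (hδ : Allowable w δ πs)
    (herr : ∀ a b, |what (a, b) - w (a, b)| ≤ εbar (a, b))
    (h1 : ∀ a b, πs b = a → εbar (a, b) ≤ δ (a, b))
    (h2 : ∀ a b, πs b ≠ a → δ (a, b) ≤ -εbar (a, b)) :
    Optimal what πs :=
  stmt18_general w δ what εbar πs hδ herr h1 h2
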